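/- Let 1 ≤ m ≤ n−1 be integers, let A ⊂ ℝⁿ be Borel measurable, and let W₀ : A → G(n,m) be Lipschitzian. Then for ℒⁿ-almost every x ∈ A, limsup_{r→0⁺} ℋ^m(A ∩ B̄(x,r) ∩ (x + W₀(x))) / (α(m)·r^m) ≥ 1/2ⁿ, where B̄(x,r) is the closed Euclidean ball. -/

import Mathlib

open MeasureTheory Metric Filter
open scoped ENNReal NNReal RealInnerProductSpace Topology

noncomputable section

abbrev En (n : ℕ) : Type := EuclideanSpace ℝ (Fin n)

def projCLM {n : ℕ} (W : Submodule ℝ (En n)) : En n →L[ℝ] En n :=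
  W.subtypeL.comp (Submodule.orthogonalProjection W)

def spanW {n m : ℕ} (w : Fin m → En n → En n) (x : En n) : Submodule ℝ (En n) :=
  Submodule.span ℝ (Set.range fun i => w i x)

def affW {n m : ℕ} (w : Fin m → En n → En n) (x : En n) : Set (En n) :=
  {y | y - x ∈ spanW w x}

def gMap {n k : ℕ} (v : Fin k → En n → En n) (u : En n) (x : En n) : En k :=
  (WithLp.equiv 2 (Fin k → ℝ)).symm fun i => ⟪v i x, x - u⟫

def unitBallVol (m : ℕ) : ℝ≥0∞ := volume (ball (0 : En m) 1)

def phiEW (n m : ℕ) (E : Set (En n)) (w : Fin m → En n → En n) (B : Set (En n)) : ℝ≥0∞ :=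
  ∫⁻ x in E, μH[(m : ℝ)] (B ∩ affW w x) ∂volume

def Y0W (n m : ℕ) (E : Set (En n)) (v : Fin (n - m) → En n → En n) (u : En n) : ℝ≥0∞ :=
  μH[(m : ℝ)] (E ∩ {x | gMap v u x = 0})

def YmW (n m : ℕ) (F : Set (En n)) (v : Fin (n - m) → En n → En n) (u : En n) : ℝ≥0∞ :=
  liminf (fun j : ℕ =>
    (∫⁻ y in closedBall (0 : En (n - m)) (1 / (j + 1)),
        μH[(m : ℝ)] (F ∩ {x | gMap v u x = y}) ∂volume)
      / volume (closedBall (0 : En (n - m)) (1 / (j + 1)))) atTop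

def polyball {n m : ℕ} (w : Fin m → En n → En n) (x₀ : En n) (r : ℝ) : Set (En n) :=
  {x | ‖projCLM (spanW w x₀) (x - x₀)‖ ≤ r ∧ ‖projCLM (spanW w x₀)ᗮ (x - x₀)‖ ≤ r}

/-!
For a Lipschitz field of planes, parametrize the planes near a point `x₀` by
`L x = P_{W x} : W x₀ → W x`, which is close to an isometry. For a fixed small vector `w`, the map
`x ↦ x + L x w` shrinks distances by a factor of at most two, so the points of a compact set `E`
that it moves out of `E` form a set whose measure is controlled by that of `cthickening r E \ E`,
hence tends to `0` as `‖w‖ ≤ r → 0`. By Fubini and Chebyshev, at almost every `x ∈ E` there are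
arbitrarily small `r` for which only a small proportion of the `w` in the ball of radius `r` lead
out of `E`. The remaining `w` are carried almost isometrically into `E ∩ (x + W x)`, so that the
upper density of `E` along its own planes is `1` almost everywhere.
-/

section Measure

variable {α : Type*} [MeasurableSpace α] {μ : Measure α}

theorem ae_frequently_not_of_tendsto_measure_zero {ι : Type*} {l : Filter ι} [l.NeBot]
    [l.IsCountablyGenerated] {p : ι → α → Prop}
    (hp : Tendsto (fun i => μ {x | p i x}) l (𝓝 0)) : ∀ᵐ x ∂μ, ∃ᶠ i in l, ¬ p i x := by
  obtain ⟨s, hs⟩ := l.exists_antitone_basis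
  have hcover : {x | ¬ ∃ᶠ i in l, ¬ p i x} ⊆ ⋃ N, {x | ∀ i ∈ s N, p i x} := by
    intro x hx
    simpa [not_frequently, hs.eventually_iff] using hx
  refine measure_mono_null hcover (measure_iUnion_null fun N => ?_)
  refine le_antisymm (ge_of_tendsto hp ?_) zero_le
  filter_upwards [hs.mem N] with i hi
  exact measure_mono fun x hx => hx i hi

theorem one_sub_mul_measure_le_measure_sdiff {s t : Set α} {ε : ℝ≥0∞} (hs : μ s ≠ ∞)
    (ht : μ t ≤ ε * μ s) : (1 - ε) * μ s ≤ μ (s \ t) := by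
  calc
    (1 - ε) * μ s = μ s - ε * μ s := by rw [ENNReal.sub_mul fun _ _ => hs, one_mul]
    _ ≤ μ s - μ t := by gcongr
    _ ≤ μ (s \ t) := le_measure_sdiff

variable [TopologicalSpace α]

theorem ae_restrict_of_forall_exists_mem_nhdsWithin [SecondCountableTopology α] {s : Set α}
    {p : α → Prop} (h : ∀ x ∈ s, ∃ u ∈ 𝓝[s] x, ∀ᵐ y ∂μ.restrict u, p y) :
    ∀ᵐ y ∂μ.restrict s, p y := by
  choose! u hu hpu using h
  obtain ⟨t, hts, ht, hcover⟩ := TopologicalSpace.countable_cover_nhdsWithin hu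
  exact ae_restrict_of_ae_restrict_of_subset hcover
    ((ae_restrict_biUnion_iff u ht p).2 fun x hx => hpu x (hts hx))

theorem ae_restrict_of_forall_isCompact_subset [OpensMeasurableSpace α] [T2Space α]
    [μ.InnerRegularCompactLTTop] {s : Set α} (hs : MeasurableSet s) (hμs : μ s ≠ ∞)
    {p : α → Prop} (h : ∀ t ⊆ s, IsCompact t → ∀ᵐ x ∂μ.restrict t, p x) :
    ∀ᵐ x ∂μ.restrict s, p x := by
  rw [ae_restrict_iff' hs, ae_iff]
  refine le_antisymm (le_of_forall_pos_le_add fun ε hε => ?_) zero_le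
  obtain ⟨t, hts, ht, hμt⟩ := hs.exists_isCompact_sdiff_lt hμs hε.ne'
  have hnull : μ {x | ¬ (x ∈ t → p x)} = 0 :=
    ae_iff.1 ((ae_restrict_iff' ht.measurableSet).1 (h t hts ht))
  calc
    μ {x | ¬ (x ∈ s → p x)} ≤ μ ({x | ¬ (x ∈ t → p x)} ∪ s \ t) := by
      refine measure_mono fun x hx => ?_
      simp only [Set.mem_union, Set.mem_sdiff, Set.mem_ofPred_eq] at hx ⊢
      tauto
    _ ≤ μ {x | ¬ (x ∈ t → p x)} + μ (s \ t) := measure_union_le _ _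
    _ ≤ 0 + ε := by rw [hnull]; gcongr

end Measure

theorem hausdorffMeasure_le_image_of_antilipschitzWith_domRestrict {X Y : Type*}
    [EMetricSpace X] [MeasurableSpace X] [BorelSpace X]
    [EMetricSpace Y] [MeasurableSpace Y] [BorelSpace Y]
    {s : Set X} {f : X → Y} {c : ℝ≥0} (hf : AntilipschitzWith c (s.domRestrict f))
    {d : ℝ} (hd : 0 ≤ d) : μH[d] s ≤ (c : ℝ≥0∞) ^ d * μH[d] (f '' s) := by
  have h := hf.le_hausdorffMeasure_image hd Set.univ
  rwa [← (isometry_subtype_coe (s := s)).hausdorffMeasure_image (.inl hd), Set.image_univ,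
    Subtype.range_coe, Set.image_univ, Set.range_domRestrict] at h

theorem addHaar_le_image_of_antilipschitzWith_domRestrict {V : Type*} [NormedAddCommGroup V]
    [NormedSpace ℝ V] [FiniteDimensional ℝ V] [MeasurableSpace V] [BorelSpace V]
    (μ : Measure V) [μ.IsAddHaarMeasure] {s : Set V} {f : V → V} {c : ℝ≥0}
    (hf : AntilipschitzWith c (s.domRestrict f)) :
    μ s ≤ (c : ℝ≥0∞) ^ Module.finrank ℝ V * μ (f '' s) := by
  have hμ := Measure.isAddLeftInvariant_eq_smul μ μH[Module.finrank ℝ V]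
  have hs := hausdorffMeasure_le_image_of_antilipschitzWith_domRestrict hf
    (Nat.cast_nonneg (Module.finrank ℝ V))
  rw [ENNReal.rpow_natCast] at hs
  rw [hμ, Measure.smul_apply, Measure.smul_apply, mul_smul_comm]
  gcongr

theorem tendsto_measure_cthickening_sdiff_of_isCompact {X : Type*} [MetricSpace X]
    [ProperSpace X] [MeasurableSpace X] [OpensMeasurableSpace X] (μ : Measure X)
    [IsFiniteMeasureOnCompacts μ] {E : Set X} (hE : IsCompact E) :
    Tendsto (fun r => μ (cthickening r E \ E)) (𝓝 0) (𝓝 0) := by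
  have hsub : Tendsto (fun r => μ (cthickening r E) - μ E) (𝓝 0) (𝓝 (μ E - μ E)) :=
    ENNReal.Tendsto.sub (tendsto_measure_cthickening_of_isCompact hE) tendsto_const_nhds
      (.inl hE.measure_lt_top.ne)
  rw [tsub_self] at hsub
  refine hsub.congr fun r => ?_
  rw [measure_sdiff (self_subset_cthickening E) hE.measurableSet.nullMeasurableSet
    hE.measure_lt_top.ne]

section Escape

variable {V F : Type*} [NormedAddCommGroup V] [NormedSpace ℝ V]
  [NormedAddCommGroup F] [NormedSpace ℝ F]

/-- The vectors `w` of norm at most `r` for which `x + T w` lies outside `E`. When `T` parametrizes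
the plane attached to `x`, it describes the part of the plane near `x` that misses `E`. -/
def escapeSet (E : Set V) (T : F →L[ℝ] V) (r : ℝ) (x : V) : Set F :=
  {w ∈ closedBall 0 r | x + T w ∉ E}

variable {E : Set V} {L : V → F →L[ℝ] V} {K : ℝ≥0} {r : ℝ}

theorem antilipschitzWith_domRestrict_add_apply (hL : LipschitzOnWith K L E) {w : F}
    (hw : K * ‖w‖ ≤ 1 / 2) : AntilipschitzWith 2 (E.domRestrict fun x => x + L x w) := by
  have hLw : LipschitzWith (1 / 2) (E.domRestrict fun x => L x w) := by
    refine LipschitzWith.of_dist_le_mul fun x y => ?_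
    calc
      dist (L x w) (L y w) = ‖(L x - L y) w‖ := by rw [dist_eq_norm, sub_apply]
      _ ≤ dist (L x) (L y) * ‖w‖ := by rw [dist_eq_norm]; exact (L x - L y).le_opNorm w
      _ ≤ K * dist x y * ‖w‖ := by
        gcongr
        exact hL.dist_le_mul x x.2 y y.2
      _ = K * ‖w‖ * dist x y := by ring
      _ ≤ 1 / 2 * dist x y := by gcongr
  have h := (isometry_subtype_coe (s := E)).antilipschitz.add_lipschitzWith hLw (by norm_num)
  have hconst : ((1 : ℝ≥0)⁻¹ - 1 / 2)⁻¹ = 2 := by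
    rw [inv_one, tsub_eq_of_eq_add (add_halves (1 : ℝ≥0)).symm, one_div, inv_inv]
  rwa [hconst] at h

variable [MeasurableSpace V] [BorelSpace V]

theorem measurableSet_setOf_mem_escapeSet [MeasurableSpace F] [BorelSpace F]
    [FiniteDimensional ℝ F] (hE : IsCompact E) (hL : ContinuousOn L E)
    (r : ℝ) : MeasurableSet {p : V × F | p.1 ∈ E ∧ p.2 ∈ escapeSet E (L p.1) r p.1} := by
  have hcont : ContinuousOn (fun p : V × F => p.1 + L p.1 p.2) (E ×ˢ closedBall 0 r) :=
    continuousOn_fst.add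
      ((hL.comp continuousOn_fst fun p hp => hp.1).clm_apply continuousOn_snd)
  have hdom : IsClosed (E ×ˢ closedBall (0 : F) r) := hE.isClosed.prod isClosed_closedBall
  have hstay := hcont.preimage_isClosed_of_isClosed hdom hE.isClosed
  convert! hdom.measurableSet.diff hstay.measurableSet using 1
  ext p
  simp only [escapeSet, Set.mem_ofPred_eq, Set.mem_sdiff, Set.mem_prod, Set.mem_inter_iff,
    Set.mem_preimage]
  tauto

variable [FiniteDimensional ℝ V] (μ : Measure V) [μ.IsAddHaarMeasure]

theorem measure_setOf_mem_escapeSet_le (hL : LipschitzOnWith K L E)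
    (hL1 : ∀ x ∈ E, ‖L x‖ ≤ 1) (hr : K * r ≤ 1 / 2) {w : F} (hw : w ∈ closedBall 0 r) :
    μ {x | x ∈ E ∧ w ∈ escapeSet E (L x) r x} ≤
      2 ^ Module.finrank ℝ V * μ (cthickening r E \ E) := by
  have hwr : ‖w‖ ≤ r := mem_closedBall_zero_iff.1 hw
  have hanti : AntilipschitzWith 2
      ({x | x ∈ E ∧ w ∈ escapeSet E (L x) r x}.domRestrict fun x => x + L x w) :=
    antilipschitzWith_domRestrict_add_apply (hL.mono fun x hx => hx.1)
      ((mul_le_mul_of_nonneg_left hwr K.2).trans hr)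
  refine (addHaar_le_image_of_antilipschitzWith_domRestrict μ hanti).trans ?_
  rw [ENNReal.coe_ofNat]
  gcongr
  rintro _ ⟨x, ⟨hx, hxw⟩, rfl⟩
  refine ⟨mem_cthickening_of_dist_le _ x _ _ hx ?_, hxw.2⟩
  simpa using ((L x).le_of_opNorm_le (hL1 x hx) w).trans ((one_mul _).trans_le hwr)

variable [MeasurableSpace F] [BorelSpace F] [FiniteDimensional ℝ F]
  (ν : Measure F) [ν.IsAddHaarMeasure]

theorem lintegral_measure_escapeSet_le (hE : IsCompact E) (hL : LipschitzOnWith K L E)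
    (hL1 : ∀ x ∈ E, ‖L x‖ ≤ 1) (hr : K * r ≤ 1 / 2) :
    ∫⁻ x in E, ν (escapeSet E (L x) r x) ∂μ ≤
      2 ^ Module.finrank ℝ V * μ (cthickening r E \ E) * ν (closedBall 0 r) := by
  set G : Set (V × F) := {p | p.1 ∈ E ∧ p.2 ∈ escapeSet E (L p.1) r p.1} with hG
  have hGm : MeasurableSet G := measurableSet_setOf_mem_escapeSet hE hL.continuousOn r
  calc
    ∫⁻ x in E, ν (escapeSet E (L x) r x) ∂μ = ∫⁻ x in E, ν (Prod.mk x ⁻¹' G) ∂μ := by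
      refine setLIntegral_congr_fun hE.measurableSet fun x hx => ?_
      simp [hG, hx]
    _ ≤ ∫⁻ x, ν (Prod.mk x ⁻¹' G) ∂μ := setLIntegral_le_lintegral _ _
    _ = ∫⁻ w, μ ((fun x => (x, w)) ⁻¹' G) ∂ν := by
      rw [← Measure.prod_apply hGm, Measure.prod_apply_symm hGm]
    _ ≤ ∫⁻ w, (closedBall 0 r).indicator
        (fun _ => 2 ^ Module.finrank ℝ V * μ (cthickening r E \ E)) w ∂ν := by
      refine lintegral_mono fun w => ?_
      by_cases hw : w ∈ closedBall 0 r
      · rw [Set.indicator_of_mem hw]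
        exact measure_setOf_mem_escapeSet_le μ hL hL1 hr hw
      · have hempty : (fun x => (x, w)) ⁻¹' G = ∅ :=
          Set.eq_empty_of_forall_notMem fun x hx => hw hx.2.1
        simp [hempty]
    _ = _ := lintegral_indicator_const measurableSet_closedBall _

theorem measure_restrict_setOf_mul_le_measure_escapeSet_le (hE : IsCompact E)
    (hL : LipschitzOnWith K L E) (hL1 : ∀ x ∈ E, ‖L x‖ ≤ 1) (hr0 : 0 < r)
    (hr : K * r ≤ 1 / 2) {ε : ℝ≥0∞} (hε : ε ≠ 0) (hε' : ε ≠ ∞) :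
    μ.restrict E {x | ε * ν (closedBall 0 r) ≤ ν (escapeSet E (L x) r x)} ≤
      2 ^ Module.finrank ℝ V * μ (cthickening r E \ E) / ε := by
  have hball : ν (closedBall 0 r) ≠ 0 := (measure_closedBall_pos ν 0 hr0).ne'
  have hball' : ν (closedBall 0 r) ≠ ∞ := measure_closedBall_lt_top.ne
  have hmeas : AEMeasurable (fun x => ν (escapeSet E (L x) r x)) (μ.restrict E) := by
    refine (measurable_measure_prodMk_left (ν := ν)
      (measurableSet_setOf_mem_escapeSet hE hL.continuousOn r)).aemeasurable.congr ?_
    filter_upwards [ae_restrict_mem hE.measurableSet] with x hx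
    simp [hx]
  refine (meas_ge_le_lintegral_div hmeas (mul_ne_zero hε hball)
    (ENNReal.mul_ne_top hε' hball')).trans ?_
  calc
    _ ≤ 2 ^ Module.finrank ℝ V * μ (cthickening r E \ E) * ν (closedBall 0 r) /
        (ε * ν (closedBall 0 r)) := by
      gcongr
      exact lintegral_measure_escapeSet_le μ ν hE hL hL1 hr
    _ = _ := ENNReal.mul_div_mul_right _ _ hball hball'

theorem ae_frequently_measure_escapeSet_lt (hE : IsCompact E) (hL : LipschitzOnWith K L E)
    (hL1 : ∀ x ∈ E, ‖L x‖ ≤ 1) {ε : ℝ≥0∞} (hε : ε ≠ 0) (hε' : ε ≠ ∞) :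
    ∀ᵐ x ∂μ.restrict E, ∃ᶠ r in 𝓝[>] (0 : ℝ),
      ν (escapeSet E (L x) r x) < ε * ν (closedBall 0 r) := by
  suffices Tendsto
      (fun r => μ.restrict E {x | ε * ν (closedBall 0 r) ≤ ν (escapeSet E (L x) r x)})
      (𝓝[>] 0) (𝓝 0) by
    simpa only [not_le] using ae_frequently_not_of_tendsto_measure_zero this
  have hbound : Tendsto (fun r => 2 ^ Module.finrank ℝ V * μ (cthickening r E \ E) / ε)
      (𝓝[>] 0) (𝓝 0) := by
    have h := ENNReal.Tendsto.div_const (ENNReal.Tendsto.const_mul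
      (tendsto_measure_cthickening_sdiff_of_isCompact μ hE)
      (.inr (ENNReal.pow_ne_top ENNReal.ofNat_ne_top : (2 : ℝ≥0∞) ^ Module.finrank ℝ V ≠ ∞)))
      (.inr hε)
    rw [mul_zero, ENNReal.zero_div] at h
    exact h.mono_left nhdsWithin_le_nhds
  have hsmall : ∀ᶠ r : ℝ in 𝓝[>] 0, K * r ≤ 1 / 2 := by
    have h : Tendsto (fun r : ℝ => K * r) (𝓝 0) (𝓝 0) := by
      simpa using (tendsto_id (x := 𝓝 (0 : ℝ))).const_mul (K : ℝ)
    exact nhdsWithin_le_nhds (h.eventually_le_const (by norm_num))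
  refine tendsto_of_tendsto_of_tendsto_of_le_of_le' tendsto_const_nhds hbound
    (.of_forall fun _ => zero_le) ?_
  filter_upwards [hsmall, self_mem_nhdsWithin] with r hr hr0
  exact measure_restrict_setOf_mul_le_measure_escapeSet_le μ ν hE hL hL1 hr0 hr hε hε'

end Escape

section Projection

variable {V : Type*} [NormedAddCommGroup V] [InnerProductSpace ℝ V] [FiniteDimensional ℝ V]

theorem antilipschitzWith_starProjection_comp_subtypeL {W₁ W₂ : Submodule ℝ V} {ε : ℝ≥0}
    (hε : ε < 1) (h : ‖W₂.starProjection - W₁.starProjection‖₊ ≤ ε) :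
    AntilipschitzWith (1 - ε)⁻¹ (W₂.starProjection ∘L W₁.subtypeL) := by
  have hdiff : LipschitzWith ε ((W₂.starProjection - W₁.starProjection) ∘ W₁.subtypeL) := by
    simpa using ((W₂.starProjection - W₁.starProjection).lipschitz.weaken h).comp
      W₁.subtypeₗᵢ.lipschitz
  have hsum := W₁.subtypeₗᵢ.antilipschitz.add_lipschitzWith hdiff (by simpa using hε)
  rw [inv_one] at hsum
  convert! hsum using 1
  ext w
  simp

theorem finrank_eq_of_nnnorm_starProjection_sub_lt_one {W₁ W₂ : Submodule ℝ V}
    (h : ‖W₂.starProjection - W₁.starProjection‖₊ < 1) :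
    Module.finrank ℝ W₁ = Module.finrank ℝ W₂ := by
  have hle : ∀ {U₁ U₂ : Submodule ℝ V}, ‖U₂.starProjection - U₁.starProjection‖₊ < 1 →
      Module.finrank ℝ U₁ ≤ Module.finrank ℝ U₂ := fun {U₁ U₂} hU =>
    LinearMap.finrank_le_finrank_of_injective
      (f := (U₂.orthogonalProjectionOnto ∘L U₁.subtypeL).toLinearMap) fun v w hvw =>
        (antilipschitzWith_starProjection_comp_subtypeL hU le_rfl).injective
          (congrArg U₂.subtypeL hvw)
  exact le_antisymm (hle h) (hle (by rwa [← nndist_eq_nnnorm, nndist_comm, nndist_eq_nnnorm]))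

theorem image_closedBall_sdiff_escapeSet_subset (E : Set V) (W₁ W₂ : Submodule ℝ V) (r : ℝ)
    (x : V) :
    (fun w : W₁ => x + W₂.starProjection w) ''
        (closedBall 0 r \ escapeSet E (W₂.starProjection ∘L W₁.subtypeL) r x) ⊆
      E ∩ closedBall x r ∩ {y | y - x ∈ W₂} := by
  rintro _ ⟨w, ⟨hw, hwE⟩, rfl⟩
  refine ⟨⟨by_contra fun h => hwE ⟨hw, h⟩, ?_⟩, ?_⟩
  · simpa using (W₂.norm_starProjection_apply_le w).trans (mem_closedBall_zero_iff.1 hw)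
  · simp

end Projection

theorem volume_le_hausdorffMeasure {ι : Type*} [Fintype ι] (s : Set (EuclideanSpace ℝ ι)) :
    volume s ≤ μH[Fintype.card ι] s := by
  calc
    volume s = volume ((WithLp.ofLp : EuclideanSpace ℝ ι → ι → ℝ) '' s) := by
      rw [show (WithLp.ofLp : EuclideanSpace ℝ ι → ι → ℝ) '' s =
        MeasurableEquiv.toLp 2 (ι → ℝ) ⁻¹' s from
          (WithLp.equiv 2 (ι → ℝ)).image_eq_preimage_symm s]
      exact ((PiLp.volume_preserving_toLp ι).measure_preimage_equiv
        (f := MeasurableEquiv.toLp 2 (ι → ℝ)) s).symm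
    _ = μH[Fintype.card ι] ((WithLp.ofLp : EuclideanSpace ℝ ι → ι → ℝ) '' s) := by
      rw [hausdorffMeasure_pi_real]
    _ ≤ μH[Fintype.card ι] s := by
      have h := (PiLp.lipschitzWith_ofLp 2 fun _ : ι => ℝ).hausdorffMeasure_image_le
        (Nat.cast_nonneg (Fintype.card ι)) s
      rwa [ENNReal.coe_one, ENNReal.one_rpow, one_mul] at h

section PlaneDensity

variable {V : Type*} [NormedAddCommGroup V] [InnerProductSpace ℝ V]
  [MeasurableSpace V] [BorelSpace V]

/-- The upper density at `x` of `A` inside the affine plane `x + W`, with respect to Hausdorff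
measure of dimension `dim W`. Dividing by the measure of the corresponding ball of the plane makes
the notion independent of how Hausdorff measure is normalized. -/
def upperPlaneDensity (A : Set V) (W : Submodule ℝ V) (x : V) : ℝ≥0∞ :=
  limsup (fun r : ℝ => μH[Module.finrank ℝ W] (A ∩ closedBall x r ∩ {y | y - x ∈ W}) /
    μH[Module.finrank ℝ W] (closedBall x r ∩ {y | y - x ∈ W})) (𝓝[>] 0)

theorem upperPlaneDensity_mono {A B : Set V} (h : A ⊆ B) (W : Submodule ℝ V) (x : V) :
    upperPlaneDensity A W x ≤ upperPlaneDensity B W x := by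
  refine limsup_le_limsup (.of_forall fun r => ENNReal.div_le_div_right ?_ _)
  gcongr

variable [FiniteDimensional ℝ V]

theorem hausdorffMeasure_closedBall_inter_plane {F : Type*} [NormedAddCommGroup F]
    [InnerProductSpace ℝ F] [FiniteDimensional ℝ F] [MeasurableSpace F] [BorelSpace F]
    {W : Submodule ℝ V} (hF : Module.finrank ℝ F = Module.finrank ℝ W) {d : ℝ} (hd : 0 ≤ d)
    (x : V) (r : ℝ) :
    μH[d] (closedBall x r ∩ {y | y - x ∈ W}) = μH[d] (closedBall (0 : F) r) := by
  let e : F ≃ₗᵢ[ℝ] W := (stdOrthonormalBasis ℝ F).equiv (stdOrthonormalBasis ℝ W) (finCongr hF)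
  have he : Isometry fun w => x + (e w : V) :=
    (isometry_add_left x).comp (isometry_subtype_coe.comp e.isometry)
  rw [← he.hausdorffMeasure_image (.inl hd)]
  congr 1
  ext y
  constructor
  · rintro ⟨hy, hyW⟩
    refine ⟨e.symm ⟨y - x, hyW⟩, ?_, by simp⟩
    simpa [dist_eq_norm] using hy
  · rintro ⟨w, hw, rfl⟩
    simpa [← Submodule.coe_norm] using hw

theorem pow_mul_hausdorffMeasure_le_of_escapeSet_le {E : Set V} {W₁ W₂ : Submodule ℝ V}
    {ε : ℝ≥0} (hε : ε < 1) (hW : ‖W₂.starProjection - W₁.starProjection‖₊ ≤ ε) {x : V} {r : ℝ}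
    (hx : μH[Module.finrank ℝ W₁] (escapeSet E (W₂.starProjection ∘L W₁.subtypeL) r x) ≤
      ε * μH[Module.finrank ℝ W₁] (closedBall (0 : W₁) r)) :
    (1 - ε : ℝ≥0∞) ^ (Module.finrank ℝ W₁ + 1) *
        μH[Module.finrank ℝ W₁] (closedBall (0 : W₁) r) ≤
      μH[Module.finrank ℝ W₁] (E ∩ closedBall x r ∩ {y | y - x ∈ W₂}) := by
  set d := Module.finrank ℝ W₁
  set stay : Set W₁ := closedBall 0 r \ escapeSet E (W₂.starProjection ∘L W₁.subtypeL) r x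
  set f : W₁ → V := fun w => x + W₂.starProjection w
  have hstay : (1 - ε : ℝ≥0∞) * μH[d] (closedBall (0 : W₁) r) ≤ μH[d] stay :=
    one_sub_mul_measure_le_measure_sdiff measure_closedBall_lt_top.ne hx
  have hf : AntilipschitzWith (1 - ε)⁻¹ f := fun v w => by
    simpa [f] using antilipschitzWith_starProjection_comp_subtypeL hε hW v w
  have himage := hf.le_hausdorffMeasure_image (Nat.cast_nonneg d) stay
  rw [ENNReal.rpow_natCast, ENNReal.coe_inv (tsub_pos_of_lt hε).ne', ENNReal.coe_sub,
    ENNReal.coe_one] at himage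
  have hε0 : (1 - ε : ℝ≥0∞) ≠ 0 := by simpa [tsub_eq_zero_iff_le] using hε
  calc
    _ = (1 - ε : ℝ≥0∞) ^ d * ((1 - ε) * μH[d] (closedBall (0 : W₁) r)) := by ring
    _ ≤ (1 - ε : ℝ≥0∞) ^ d * ((1 - ε : ℝ≥0∞)⁻¹ ^ d * μH[d] (f '' stay)) := by
      gcongr _ * ?_
      exact hstay.trans himage
    _ = μH[d] (f '' stay) := by
      rw [← mul_assoc, ← mul_pow, ENNReal.mul_inv_cancel hε0 (by simp), one_pow, one_mul]
    _ ≤ _ := measure_mono (image_closedBall_sdiff_escapeSet_subset E W₁ W₂ r x)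

theorem pow_le_upperPlaneDensity_of_frequently {E : Set V} {W₁ W₂ : Submodule ℝ V} {ε : ℝ≥0}
    (hε : ε < 1) (hW : ‖W₂.starProjection - W₁.starProjection‖₊ ≤ ε) {x : V}
    (hx : ∃ᶠ r in 𝓝[>] (0 : ℝ),
      μH[Module.finrank ℝ W₁] (escapeSet E (W₂.starProjection ∘L W₁.subtypeL) r x) ≤
        ε * μH[Module.finrank ℝ W₁] (closedBall (0 : W₁) r)) :
    (1 - ε : ℝ≥0∞) ^ (Module.finrank ℝ W₂ + 1) ≤ upperPlaneDensity E W₂ x := by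
  have hrank := finrank_eq_of_nnnorm_starProjection_sub_lt_one (hW.trans_lt hε)
  refine le_limsup_of_frequently_le'
    ((hx.and_eventually self_mem_nhdsWithin).mono fun r ⟨hr, hr0⟩ => ?_)
  rw [hausdorffMeasure_closedBall_inter_plane hrank (Nat.cast_nonneg _), ← hrank,
    ENNReal.le_div_iff_mul_le (.inl (measure_closedBall_pos _ _ hr0).ne')
      (.inl measure_closedBall_lt_top.ne)]
  exact pow_mul_hausdorffMeasure_le_of_escapeSet_le hε hW hr

theorem unitBallVol_mul_le_hausdorffMeasure_closedBall_inter_plane (W : Submodule ℝ V) (x : V)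
    {r : ℝ} (hr : 0 ≤ r) :
    unitBallVol (Module.finrank ℝ W) * ENNReal.ofReal (r ^ Module.finrank ℝ W) ≤
      μH[Module.finrank ℝ W] (closedBall x r ∩ {y | y - x ∈ W}) := by
  rw [hausdorffMeasure_closedBall_inter_plane (F := En (Module.finrank ℝ W))
    finrank_euclideanSpace_fin (Nat.cast_nonneg _)]
  calc
    _ = volume (closedBall (0 : En (Module.finrank ℝ W)) r) := by
      rw [Measure.addHaar_closedBall _ _ hr, mul_comm, finrank_euclideanSpace_fin, unitBallVol]
    _ ≤ _ := by
      simpa using volume_le_hausdorffMeasure (closedBall (0 : En (Module.finrank ℝ W)) r)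

theorem upperPlaneDensity_le_limsup_div_unitBallVol (A : Set V) (W : Submodule ℝ V) (x : V) :
    upperPlaneDensity A W x ≤
      limsup (fun r : ℝ => μH[Module.finrank ℝ W] (A ∩ closedBall x r ∩ {y | y - x ∈ W}) /
        (unitBallVol (Module.finrank ℝ W) * ENNReal.ofReal (r ^ Module.finrank ℝ W)))
        (𝓝[>] 0) := by
  refine limsup_le_limsup (eventually_mem_nhdsWithin.mono fun r hr => ?_)
  exact ENNReal.div_le_div_left
    (unitBallVol_mul_le_hausdorffMeasure_closedBall_inter_plane W x (le_of_lt hr)) _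

variable (μ : Measure V) [μ.IsAddHaarMeasure] {K : ℝ≥0} {W : V → Submodule ℝ V}

theorem ae_pow_le_upperPlaneDensity_of_isCompact {E : Set V} (hE : IsCompact E)
    (hW : LipschitzOnWith K (fun x => (W x).starProjection) E) {ε : ℝ≥0} (hε0 : 0 < ε)
    (hε : ε < 1) (W₁ : Submodule ℝ V)
    (hW₁ : ∀ x ∈ E, ‖(W x).starProjection - W₁.starProjection‖₊ ≤ ε) :
    ∀ᵐ x ∂μ.restrict E,
      (1 - ε : ℝ≥0∞) ^ (Module.finrank ℝ (W x) + 1) ≤ upperPlaneDensity E (W x) x := by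
  have hL : LipschitzOnWith K (fun x => (W x).starProjection ∘L W₁.subtypeL) E := by
    refine LipschitzOnWith.of_dist_le_mul fun x hx y hy => ?_
    refine le_trans ?_ (hW.dist_le_mul x hx y hy)
    rw [dist_eq_norm, dist_eq_norm, ← ContinuousLinearMap.sub_comp]
    exact (ContinuousLinearMap.opNorm_comp_le _ _).trans
      (mul_le_of_le_one_right (norm_nonneg _) W₁.norm_subtypeL_le)
  have hL1 : ∀ x ∈ E, ‖(W x).starProjection ∘L W₁.subtypeL‖ ≤ 1 := fun x _ =>
    (ContinuousLinearMap.opNorm_comp_le _ _).trans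
      (mul_le_one₀ (W x).starProjection_norm_le (norm_nonneg _) W₁.norm_subtypeL_le)
  filter_upwards [ae_restrict_mem hE.measurableSet, ae_frequently_measure_escapeSet_lt μ
    μH[Module.finrank ℝ W₁] hE hL hL1 (ENNReal.coe_ne_zero.2 hε0.ne') ENNReal.coe_ne_top]
    with x hxE hx
  exact pow_le_upperPlaneDensity_of_frequently hε (hW₁ x hxE) (hx.mono fun r hr => hr.le)

theorem ae_pow_le_upperPlaneDensity {A : Set V} (hA : MeasurableSet A)
    (hW : LipschitzOnWith K (fun x => (W x).starProjection) A) {ε : ℝ≥0} (hε0 : 0 < ε)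
    (hε : ε < 1) :
    ∀ᵐ x ∂μ.restrict A,
      (1 - ε : ℝ≥0∞) ^ (Module.finrank ℝ (W x) + 1) ≤ upperPlaneDensity A (W x) x := by
  refine ae_restrict_of_forall_exists_mem_nhdsWithin fun x₀ hx₀ => ?_
  have hclose : {x | ‖(W x).starProjection - (W x₀).starProjection‖₊ < ε} ∈ 𝓝[A] x₀ := by
    have h := (hW.continuousOn x₀ hx₀).eventually (ball_mem_nhds _ (NNReal.coe_pos.2 hε0))
    filter_upwards [h] with x hx
    rwa [dist_nndist, NNReal.coe_lt_coe, nndist_eq_nnnorm] at hx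
  obtain ⟨δ, hδ, hball⟩ := Metric.mem_nhdsWithin_iff.1 hclose
  refine ⟨A ∩ ball x₀ δ, inter_mem self_mem_nhdsWithin
    (nhdsWithin_le_nhds (ball_mem_nhds x₀ hδ)), ?_⟩
  refine ae_restrict_of_forall_isCompact_subset (hA.inter measurableSet_ball)
    (measure_ne_top_of_subset Set.inter_subset_right measure_ball_lt_top.ne) fun E hE hEc => ?_
  have hEA : E ⊆ A := hE.trans Set.inter_subset_left
  filter_upwards [ae_pow_le_upperPlaneDensity_of_isCompact μ hEc (hW.mono hEA) hε0 hε (W x₀)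
    fun x hx => (hball ⟨(hE hx).2, (hE hx).1⟩).le] with x hx
  exact hx.trans (upperPlaneDensity_mono hEA _ _)

theorem density_lower_bound_general {A : Set V} (hA : MeasurableSet A)
    (hW : LipschitzOnWith K (fun x => (W x).starProjection) A) :
    ∀ᵐ x ∂μ.restrict A, 1 ≤ upperPlaneDensity A (W x) x := by
  obtain ⟨ε, -, hε, hε0⟩ := exists_seq_strictAnti_tendsto' (zero_lt_one (α := ℝ≥0))
  filter_upwards [ae_all_iff.2 fun k => ae_pow_le_upperPlaneDensity μ hA hW (hε k).1 (hε k).2]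
    with x hx
  have hlim : Tendsto (fun k => (1 - ε k : ℝ≥0∞) ^ (Module.finrank ℝ (W x) + 1)) atTop (𝓝 1) := by
    have h := ENNReal.Tendsto.pow (n := Module.finrank ℝ (W x) + 1)
      (ENNReal.Tendsto.sub tendsto_const_nhds (ENNReal.tendsto_coe.2 hε0) (.inl ENNReal.one_ne_top))
    simpa using h
  exact le_of_tendsto' hlim hx

end PlaneDensity

/-- If `A ⊂ ℝⁿ` is Borel and `W₀ : A → G(n,m)` is Lipschitzian, then for
`ℒⁿ`-a.e. `x ∈ A`,
`limsup_{r→0⁺} ℋ^m(A ∩ B̄(x,r) ∩ (x + W₀(x))) / (α(m)·r^m) ≥ 1/2ⁿ`. -/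
theorem density_lower_bound
    (n m : ℕ) (hm : 1 ≤ m) (hmn : m + 1 ≤ n)
    (A : Set (En n)) (hA : MeasurableSet A)
    (W₀ : En n → Submodule ℝ (En n))
    (hrank : ∀ x ∈ A, Module.finrank ℝ (W₀ x) = m)
    (K : ℝ≥0) (hlip : LipschitzOnWith K (fun x => projCLM (W₀ x)) A) :
    ∀ᵐ x ∂(volume.restrict A),
      (1 / 2 ^ n : ℝ≥0∞) ≤
        limsup (fun r : ℝ =>
            μH[(m : ℝ)] (A ∩ closedBall x r ∩ {y | y - x ∈ W₀ x}) /
              (unitBallVol m * ENNReal.ofReal (r ^ m)))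
          (𝓝[>] (0 : ℝ)) := by
  filter_upwards [density_lower_bound_general volume hA hlip, ae_restrict_mem hA] with x hx hxA
  obtain rfl := hrank x hxA
  calc
    (1 / 2 ^ n : ℝ≥0∞) ≤ 1 := by simp [one_le_pow₀]
    _ ≤ upperPlaneDensity A (W₀ x) x := hx
    _ ≤ _ := upperPlaneDensity_le_limsup_div_unitBallVol A (W₀ x) x
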